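/- Edge trace identity for the linearized Cotton–York operator: for every C^∞ matrix field τ : ℝ³ → ℝ^{3×3} with symmetric values and every choice of pairwise orthogonal unit vectors t, m, n ∈ ℝ³ with t' := n × m, the identity mᵀ (tr3cott(τ)) t' = tre3(τ) + (1/2) ∂_t ∂_t ( nᵀ τ n + 2 t'ᵀ (tr1cott(τ)) m ) − ∂_{t'}( ∂_m ( tᵀ (tr1cott(τ)) t ) ) holds at every point of ℝ³. -/

import Mathlib

noncomputable section

open Matrix

/-- Vectors in ℝ³. -/
abbrev V3 := Fin 3 → ℝ
/-- 3×3 real matrices. -/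
abbrev M3 := Matrix (Fin 3) (Fin 3) ℝ

/-- Partial derivative ∂ᵢ of a scalar field. -/
def pd (i : Fin 3) (f : V3 → ℝ) : V3 → ℝ :=
  fun x => fderiv ℝ f x (Pi.single i 1)

/-- Gradient matrix of a vector field: (grad v)_{ij} = ∂ⱼ vᵢ. -/
def vgrad (v : V3 → V3) : V3 → M3 :=
  fun x => Matrix.of fun i j => pd j (fun y => v y i) x

/-- Divergence of a vector field. -/
def vdiv (v : V3 → V3) : V3 → ℝ :=
  fun x => ∑ i, pd i (fun y => v y i) x

/-- Cross product on ℝ³. -/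
def cross (a b : V3) : V3 :=
  fun i => a (i + 1) * b (i + 2) - a (i + 2) * b (i + 1)

/-- Curl of a vector field. -/
def vcurl (v : V3 → V3) : V3 → V3 :=
  fun x i => pd (i + 1) (fun y => v y (i + 2)) x - pd (i + 2) (fun y => v y (i + 1)) x

/-- Row-wise curl of a matrix field. -/
def mcurl (τ : V3 → M3) : V3 → M3 :=
  fun x => Matrix.of fun i j =>
    pd (j + 1) (fun y => τ y i (j + 2)) x - pd (j + 2) (fun y => τ y i (j + 1)) x

/-- Row-wise divergence of a matrix field. -/
def mdiv (τ : V3 → M3) : V3 → V3 :=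
  fun x i => ∑ j, pd j (fun y => τ y i j) x

/-- Symmetric part of a matrix. -/
def msym (A : M3) : M3 := (1 / 2 : ℝ) • (A + Aᵀ)

/-- Deviatoric (trace-free) part of a matrix. -/
def devm (A : M3) : M3 := A - ((1 / 3 : ℝ) * A.trace) • (1 : M3)

/-- The skew-symmetric matrix associated to a vector: mskw(ω) y = ω × y. -/
def mskw (w : V3) : M3 := !![0, -w 2, w 1; w 2, 0, -w 0; -w 1, w 0, 0]

/-- vskw(A) := mskw⁻¹(skw A). -/
def vskw (A : M3) : V3 :=
  (1 / 2 : ℝ) • ![A 2 1 - A 1 2, A 0 2 - A 2 0, A 1 0 - A 0 1]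

/-- S⁻¹(A) := Aᵀ − (1/2)(tr A)I. -/
def Sinv (A : M3) : M3 := Aᵀ - ((1 / 2 : ℝ) * A.trace) • (1 : M3)

/-- S(A) := Aᵀ − (tr A)I. -/
def Sop (A : M3) : M3 := Aᵀ - A.trace • (1 : M3)

/-- Incompatibility operator inc τ := curl (S⁻¹ (curl τ)). -/
def inc (τ : V3 → M3) : V3 → M3 := mcurl fun x => Sinv (mcurl τ x)

/-- Linearized Cotton–York operator cott τ := curl (S⁻¹ (inc τ)). -/
def cott (τ : V3 → M3) : V3 → M3 := mcurl fun x => Sinv (inc τ x)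

/-- Hessian matrix of a scalar field. -/
def hess (u : V3 → ℝ) : V3 → M3 :=
  fun x => Matrix.of fun i j => pd i (pd j u) x

/-- Euclidean dot product on ℝ³. -/
def dotp (a b : V3) : ℝ := ∑ i, a i * b i

/-- Smoothness of a vector field (componentwise C^∞). -/
def SmoothV (v : V3 → V3) : Prop := ∀ i, ContDiff ℝ (⊤ : ℕ∞) fun x => v x i

/-- Smoothness of a matrix field (entrywise C^∞). -/
def SmoothM (τ : V3 → M3) : Prop := ∀ i j, ContDiff ℝ (⊤ : ℕ∞) fun x => τ x i j

/-- Conformal Killing fields. -/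
def CK (v : V3 → V3) : Prop :=
  ∃ (a c d : V3) (b : ℝ), ∀ x,
    v x = dotp x x • a - (2 * dotp a x) • x + b • x + cross c x + d

/-- Rigid motions. -/
def RM (v : V3 → V3) : Prop := ∃ a b : V3, ∀ x, v x = cross a x + b

/-- Lowest-order Raviart–Thomas fields. -/
def RT (v : V3 → V3) : Prop := ∃ (a : V3) (b : ℝ), ∀ x, v x = a + b • x

/-- Polynomial scalar functions of total degree at most k. -/
def PolyLe (k : ℕ) (f : V3 → ℝ) : Prop :=
  ∃ p : MvPolynomial (Fin 3) ℝ, p.totalDegree ≤ k ∧ ∀ x, f x = MvPolynomial.eval x p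

/-- Matrix fields with entries in P_k and values symmetric traceless. -/
def PolyLeST (k : ℕ) (τ : V3 → M3) : Prop :=
  (∀ i j, PolyLe k fun x => τ x i j) ∧ (∀ x, (τ x)ᵀ = τ x) ∧ ∀ x, (τ x).trace = 0


/-- Directional derivative of a scalar field along a fixed vector w. -/
def pdir (w : V3) (f : V3 → ℝ) : V3 → ℝ := fun x => fderiv ℝ f x w

/-- Entrywise directional derivative of a vector field. -/
def pdirV (w : V3) (v : V3 → V3) : V3 → V3 := fun x i => pdir w (fun y => v y i) x

/-- Entrywise directional derivative of a matrix field. -/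
def pdirM (w : V3) (A : V3 → M3) : V3 → M3 :=
  fun x => Matrix.of fun i j => pdir w (fun y => A y i j) x

/-- Column-wise curl ∇ × A: the j-th column is the curl of the j-th column of A. -/
def colcurl (A : V3 → M3) : V3 → M3 :=
  fun x => Matrix.of fun i j =>
    pd (i + 1) (fun y => A y (i + 2) j) x - pd (i + 2) (fun y => A y (i + 1) j) x

/-- Gradient of a scalar field as a vector field. -/
def gradS (f : V3 → ℝ) : V3 → V3 := fun x i => pd i f x

/-- Projection matrix Π := I − n nᵀ. -/
def Pm (n : V3) : M3 := 1 - Matrix.vecMulVec n n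

/-- Row-wise cross product of a matrix with a vector. -/
def mcrossv (A : M3) (w : V3) : M3 := Matrix.of fun i => cross (A i) w

/-- Surface gradient grad_f w := (grad w) Π. -/
def gradf (n : V3) (w : V3 → V3) : V3 → M3 := fun x => vgrad w x * Pm n

/-- Surface deformation def_f w := sym (grad_f w). -/
def deff (n : V3) (w : V3 → V3) : V3 → M3 := fun x => msym (gradf n w x)

/-- Surface divergence of a matrix field: div_f A := (∂_t A) t + (∂_m A) m. -/
def divfM (t m : V3) (A : V3 → M3) : V3 → V3 :=
  fun x => (pdirM t A x).mulVec t + (pdirM m A x).mulVec m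

/-- Surface divergence of a vector field: div_f w := t·∂_t w + m·∂_m w. -/
def divfV (t m : V3) (w : V3 → V3) : V3 → ℝ :=
  fun x => dotp t (pdirV t w x) + dotp m (pdirV m w x)

/-- Surface deviatoric part dev_f A := ΠAΠ − (1/2) tr(ΠAΠ) Π. -/
def devf (n : V3) (A : M3) : M3 :=
  Pm n * A * Pm n - ((1 / 2 : ℝ) * (Pm n * A * Pm n).trace) • Pm n

/-- tr2inc(τ) := 2 def_f(Πτn) − Π(∂_n τ)Π. -/
def tr2inc (n : V3) (τ : V3 → M3) : V3 → M3 :=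
  fun x => (2 : ℝ) • deff n (fun y => (Pm n * τ y).mulVec n) x - Pm n * pdirM n τ x * Pm n

/-- tr1cott(τ) := sym((Πτ) × n). -/
def tr1cott (n : V3) (τ : V3 → M3) : V3 → M3 :=
  fun x => msym (mcrossv (Pm n * τ x) n)

/-- tr2cott(τ) := sym(tr2inc(τ) × n). -/
def tr2cott (n : V3) (τ : V3 → M3) : V3 → M3 :=
  fun x => msym (mcrossv (tr2inc n τ x) n)

/-- tr3cott(τ) := dev_f(tr2inc(sym curl τ)). -/
def tr3cott (n : V3) (τ : V3 → M3) : V3 → M3 :=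
  fun x => devf n (tr2inc n (fun y => msym (mcurl τ y)) x)

/-- tre2(τ) := 2(∂_t(sym curl τ))t − ∇(tᵀ(curl τ)t). -/
def tre2 (t : V3) (τ : V3 → M3) : V3 → V3 :=
  fun x => (2 : ℝ) • (pdirM t (fun y => msym (mcurl τ y)) x).mulVec t
    - gradS (fun y => dotp t ((mcurl τ y).mulVec t)) x

/-- tre3(τ) := −tᵀ(∇ × (sym curl τ))t − (1/2)∂_t(t·div τ). -/
def tre3 (t : V3) (τ : V3 → M3) : V3 → ℝ :=
  fun x => -dotp t ((colcurl (fun y => msym (mcurl τ y)) x).mulVec t)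
    - (1 / 2 : ℝ) * pdir t (fun y => dotp t (mdiv τ y)) x

lemma pd_smooth (i : Fin 3) {f : V3 → ℝ} (hf : ContDiff ℝ (⊤ : ℕ∞) f) :
    ContDiff ℝ (⊤ : ℕ∞) (pd i f) := by
  unfold pd
  exact (hf.fderiv_right (m := (⊤ : ℕ∞)) (by simp)).clm_apply contDiff_const

lemma pd_comm (i j : Fin 3) {f : V3 → ℝ} (hf : ContDiff ℝ (⊤ : ℕ∞) f) (x : V3) :
    pd i (pd j f) x = pd j (pd i f) x := by
  have h1 : DifferentiableAt ℝ (fderiv ℝ f) x :=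
    ((hf.fderiv_right (m := (⊤ : ℕ∞)) (by simp)).differentiable (by simp)) x
  have key : ∀ i j : Fin 3, pd i (pd j f) x
      = fderiv ℝ (fderiv ℝ f) x (Pi.single i 1) (Pi.single j 1) := by
    intro i j
    unfold pd
    rw [fderiv_clm_apply h1 (differentiableAt_const _)]
    simp
  rw [key, key]
  have hs : IsSymmSndFDerivAt ℝ f x := by
    apply hf.contDiffAt.isSymmSndFDerivAt
    simp only [minSmoothness_of_isRCLikeNormedField]
    exact WithTop.coe_le_coe.mpr (le_top : (2 : ℕ∞) ≤ ⊤)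
  exact hs _ _

lemma pdir_eq (w : V3) (f : V3 → ℝ) (x : V3) :
    pdir w f x = ∑ k, w k * pd k f x := by
  unfold pdir pd
  conv_lhs => rw [pi_eq_sum_univ' w]
  rw [map_sum]
  refine Finset.sum_congr rfl fun k _ => ?_
  rw [map_smul, smul_eq_mul]

lemma pd_lin (k : Fin 3) (A : V3 → M3) (hA : SmoothM A) (c : Fin 3 → Fin 3 → ℝ) (x : V3) :
    pd k (fun y => ∑ i, ∑ j, c i j * A y i j) x
      = ∑ i, ∑ j, c i j * pd k (fun y => A y i j) x := by
  have hd : ∀ i j, DifferentiableAt ℝ (fun y => A y i j) x :=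
    fun i j => (hA i j).differentiable (by simp) x
  unfold pd
  rw [fderiv_fun_sum (fun i _ => DifferentiableAt.fun_sum fun j _ => (hd i j).const_mul _)]
  simp only [_root_.sum_apply]
  refine Finset.sum_congr rfl fun i _ => ?_
  rw [fderiv_fun_sum (fun j _ => (hd i j).const_mul _)]
  simp only [_root_.sum_apply]
  refine Finset.sum_congr rfl fun j _ => ?_
  rw [fderiv_const_mul (hd i j)]
  simp

/-- First derivative along `u`, tested with `a`, `b`. -/
def PP (A : V3 → M3) (u a b : V3) (x : V3) : ℝ :=
  ∑ k, ∑ i, ∑ j, u k * a i * b j * pd k (fun y => A y i j) x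

/-- Second derivative along `u`, `v`, tested with `a`, `b`. -/
def FF (A : V3 → M3) (u v a b : V3) (x : V3) : ℝ :=
  ∑ k, ∑ l, ∑ i, ∑ j, u k * v l * a i * b j * pd k (pd l (fun y => A y i j)) x

lemma smooth_pdM (k : Fin 3) (A : V3 → M3) (hA : SmoothM A) :
    SmoothM (fun y => Matrix.of fun i j => pd k (fun z => A z i j) y) :=
  fun i j => pd_smooth k (hA i j)

lemma pdir_lin (w : V3) (A : V3 → M3) (hA : SmoothM A) (c : Fin 3 → Fin 3 → ℝ) :
    pdir w (fun y => ∑ i, ∑ j, c i j * A y i j)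
      = fun x => ∑ k, ∑ i, ∑ j, w k * c i j * pd k (fun y => A y i j) x := by
  ext x
  rw [pdir_eq]
  refine Finset.sum_congr rfl fun k _ => ?_
  rw [pd_lin k A hA, Finset.mul_sum]
  refine Finset.sum_congr rfl fun i _ => ?_
  rw [Finset.mul_sum]
  refine Finset.sum_congr rfl fun j _ => ?_
  ring

lemma pdir_pdir_lin (u v : V3) (A : V3 → M3) (hA : SmoothM A) (c : Fin 3 → Fin 3 → ℝ) (x : V3) :
    pdir u (pdir v (fun y => ∑ i, ∑ j, c i j * A y i j)) x
      = ∑ k, ∑ l, ∑ i, ∑ j, u k * v l * c i j * pd k (pd l (fun y => A y i j)) x := by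
  rw [pdir_lin v A hA, pdir_eq]
  refine Finset.sum_congr rfl fun k _ => ?_
  have hd : ∀ l i j, DifferentiableAt ℝ (fun y => v l * c i j * pd l (fun z => A z i j) y) x :=
    fun l i j => ((pd_smooth l (hA i j)).differentiable (by simp) x).const_mul _
  have : pd k (fun y => ∑ l, ∑ i, ∑ j, v l * c i j * pd l (fun z => A z i j) y) x
      = ∑ l, pd k (fun y => ∑ i, ∑ j, v l * c i j * pd l (fun z => A z i j) y) x := by
    rw [pd, fderiv_fun_sum (fun l _ => DifferentiableAt.fun_sum fun i _ =>
      DifferentiableAt.fun_sum fun j _ => hd l i j)]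
    simp only [_root_.sum_apply]
    rfl
  rw [this, Finset.mul_sum]
  refine Finset.sum_congr rfl fun l _ => ?_
  have h2 := pd_lin k _ (smooth_pdM l A hA) (fun i j => v l * c i j) x
  simp only [Matrix.of_apply] at h2
  rw [h2, Finset.mul_sum]
  refine Finset.sum_congr rfl fun i _ => ?_
  rw [Finset.mul_sum]
  refine Finset.sum_congr rfl fun j _ => ?_
  change u k * (v l * c i j * pd k (pd l (fun z => A z i j)) x) = _
  ring

lemma smooth_symcurl (τ : V3 → M3) (hτ : SmoothM τ) : SmoothM (fun y => msym (mcurl τ y)) := by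
  intro i j
  have h := fun k i j => pd_smooth k (hτ i j)
  simp only [msym, mcurl, Matrix.smul_apply, Matrix.add_apply, Matrix.transpose_apply,
    Matrix.of_apply, smul_eq_mul]
  exact contDiff_const.mul (((h _ _ _).sub (h _ _ _)).add ((h _ _ _).sub (h _ _ _)))

lemma pd_symcurl (τ : V3 → M3) (hτ : SmoothM τ) (k i j : Fin 3) (x : V3) :
    pd k (fun y => msym (mcurl τ y) i j) x = (1 / 2 : ℝ) *
      ((pd k (pd (j + 1) (fun y => τ y i (j + 2))) x - pd k (pd (j + 2) (fun y => τ y i (j + 1))) x)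
      + (pd k (pd (i + 1) (fun y => τ y j (i + 2))) x
          - pd k (pd (i + 2) (fun y => τ y j (i + 1))) x)) := by
  have h : ∀ k i j, DifferentiableAt ℝ (pd k (fun y => τ y i j)) x :=
    fun k i j => (pd_smooth k (hτ i j)).differentiable (by simp) x
  simp only [msym, mcurl, Matrix.smul_apply, Matrix.add_apply, Matrix.transpose_apply,
    Matrix.of_apply, smul_eq_mul]
  have e : HasFDerivAt (fun y => (1 / 2 : ℝ) *
      ((pd (j + 1) (fun y => τ y i (j + 2)) y - pd (j + 2) (fun y => τ y i (j + 1)) y)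
      + (pd (i + 1) (fun y => τ y j (i + 2)) y - pd (i + 2) (fun y => τ y j (i + 1)) y))) _ x :=
    ((((h _ _ _).hasFDerivAt.sub (h _ _ _).hasFDerivAt).add
      ((h _ _ _).hasFDerivAt.sub (h _ _ _).hasFDerivAt)).const_mul (1 / 2 : ℝ))
  rw [pd, e.fderiv]
  simp [pd]
  ring

/-- Derivative along `u` of the row-wise curl, tested with `a`, `b`. -/
def CC (τ : V3 → M3) (u a b : V3) (x : V3) : ℝ :=
  ∑ k, ∑ i, ∑ j, u k * a i * b j *
    (pd k (pd (j + 1) (fun y => τ y i (j + 2))) x - pd k (pd (j + 2) (fun y => τ y i (j + 1))) x)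

lemma PP_symcurl (τ : V3 → M3) (hτ : SmoothM τ) (u a b : V3) (x : V3) :
    PP (fun y => msym (mcurl τ y)) u a b x = (1 / 2 : ℝ) * (CC τ u a b x + CC τ u b a x) := by
  simp only [PP, pd_symcurl τ hτ, CC]
  rw [← Finset.sum_add_distrib, Finset.mul_sum]
  refine Finset.sum_congr rfl fun k _ => ?_
  conv_rhs => rw [add_comm]; rw [Finset.sum_comm]
  rw [← Finset.sum_add_distrib, Finset.mul_sum]
  refine Finset.sum_congr rfl fun i _ => ?_
  rw [← Finset.sum_add_distrib, Finset.mul_sum]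
  refine Finset.sum_congr rfl fun j _ => ?_
  ring

lemma CC_cross (τ : V3 → M3) (u a c d : V3) (x : V3) :
    CC τ u a (cross c d) x = FF τ u c a d x - FF τ u d a c x := by
  simp only [CC, FF]
  rw [← Finset.sum_sub_distrib]
  refine Finset.sum_congr rfl fun k _ => ?_
  simp only [cross, Fin.sum_univ_three, Fin.isValue, Fin.reduceAdd, zero_add]
  ring

lemma FF_symm (τ : V3 → M3) (hsym : ∀ x, (τ x)ᵀ = τ x) (u v a b x : V3) :
    FF τ u v a b x = FF τ u v b a x := by
  have h : ∀ i j, (fun y => τ y i j) = fun y => τ y j i := by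
    intro i j; ext y
    have := congrFun (congrFun (hsym y) j) i
    simpa using this
  simp only [FF]
  refine Finset.sum_congr rfl fun k _ => Finset.sum_congr rfl fun l _ => ?_
  rw [Finset.sum_comm]
  refine Finset.sum_congr rfl fun i _ => Finset.sum_congr rfl fun j _ => ?_
  rw [h j i]; ring

lemma FF_comm (τ : V3 → M3) (hτ : SmoothM τ) (u v a b x : V3) :
    FF τ u v a b x = FF τ v u a b x := by
  simp only [FF]
  rw [Finset.sum_comm]
  refine Finset.sum_congr rfl fun k _ => Finset.sum_congr rfl fun l _ => ?_
  refine Finset.sum_congr rfl fun i _ => Finset.sum_congr rfl fun j _ => ?_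
  rw [pd_comm l k (hτ i j)]; ring

lemma colcurl_eq (A : V3 → M3) (c d q : V3) (x : V3) :
    dotp (cross c d) ((colcurl A x).mulVec q) = PP A c d q x - PP A d c q x := by
  simp only [dotp, Matrix.mulVec, dotProduct, colcurl, PP, cross, Matrix.of_apply,
    Fin.sum_univ_three]
  simp only [Fin.isValue, Fin.reduceAdd, zero_add]
  ring

lemma Pm_mulVec (n b : V3) (h : dotp b n = 0) : (Pm n).mulVec b = b := by
  simp only [dotp, Fin.sum_univ_three] at h
  ext i
  simp only [Pm, Matrix.sub_mulVec, Matrix.one_mulVec, Matrix.vecMulVec_mulVec, Pi.sub_apply]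
  simp only [dotProduct, Fin.sum_univ_three, Pi.smul_apply, MulOpposite.smul_eq_mul_unop,
    MulOpposite.unop_op]
  linear_combination (-n i) * h

lemma Pm_transpose (n : V3) : (Pm n)ᵀ = Pm n := by
  ext i j
  simp [Pm, Matrix.vecMulVec_apply, Matrix.one_apply, eq_comm, mul_comm]

lemma dotp_eq (a b : V3) : dotp a b = a ⬝ᵥ b := rfl

lemma dotp_Pm (n a v : V3) (h : dotp a n = 0) : dotp a ((Pm n).mulVec v) = dotp a v := by
  rw [dotp_eq, Matrix.dotProduct_mulVec, ← Matrix.mulVec_transpose, Pm_transpose, Pm_mulVec n a h,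
    dotp_eq]

lemma dotp_mulVec (a b : V3) (A : M3) :
    dotp a (A.mulVec b) = ∑ i, ∑ j, a i * b j * A i j := by
  simp only [dotp, Matrix.mulVec, dotProduct, Finset.mul_sum]
  refine Finset.sum_congr rfl fun i _ => Finset.sum_congr rfl fun j _ => ?_
  ring

lemma dotp_msym (a b : V3) (A : M3) :
    dotp a ((msym A).mulVec b) = (1 / 2 : ℝ) * (dotp a (A.mulVec b) + dotp b (A.mulVec a)) := by
  simp only [dotp, msym, Matrix.mulVec, dotProduct, Fin.sum_univ_three, Matrix.smul_apply,
    Matrix.add_apply, Matrix.transpose_apply, smul_eq_mul]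
  ring

lemma dotp_mcrossv (n a b : V3) (h : dotp a n = 0) (A : M3) :
    dotp a ((mcrossv (Pm n * A) n).mulVec b) = dotp a (A.mulVec (cross n b)) := by
  have : (mcrossv (Pm n * A) n).mulVec b = (Pm n * A).mulVec (cross n b) := by
    generalize Pm n * A = B
    ext i
    simp only [mcrossv, cross, Matrix.mulVec, dotProduct, Fin.sum_univ_three, Matrix.of_apply,
      Fin.isValue, Fin.reduceAdd, zero_add]
    ring
  rw [this, ← Matrix.mulVec_mulVec, dotp_Pm n a _ h]

lemma devf_test (n a b : V3) (ha : dotp a n = 0) (hb : dotp b n = 0) (hab : dotp a b = 0)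
    (A : M3) : dotp a ((devf n A).mulVec b) = dotp a (A.mulVec b) := by
  rw [devf, Matrix.sub_mulVec, Matrix.smul_mulVec, Pm_mulVec n b hb, ← Matrix.mulVec_mulVec,
    Pm_mulVec n b hb, ← Matrix.mulVec_mulVec, dotp_eq, dotProduct_sub, dotProduct_smul,
    ← dotp_eq, ← dotp_eq, hab, dotp_Pm n a _ ha]
  simp

lemma gradf_test (n a b : V3) (ha : dotp a n = 0) (hb : dotp b n = 0) (A : V3 → M3)
    (hA : SmoothM A) (x : V3) :
    dotp a ((gradf n (fun y => (Pm n * A y).mulVec n) x).mulVec b) = PP A b a n x := by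
  rw [gradf, ← Matrix.mulVec_mulVec, Pm_mulVec n b hb]
  have h1 : ∀ i, (fun y => ((Pm n * A y).mulVec n) i)
      = fun y => ∑ k, ∑ j, Pm n i k * n j * A y k j := by
    intro i; ext y
    rw [← Matrix.mulVec_mulVec]
    simp only [Matrix.mulVec, dotProduct, Finset.mul_sum]
    refine Finset.sum_congr rfl fun k _ => Finset.sum_congr rfl fun j _ => ?_
    ring
  have h2 : (vgrad (fun y => (Pm n * A y).mulVec n) x).mulVec b
      = (Pm n).mulVec (fun k => ∑ l, ∑ j, b l * n j * pd l (fun y => A y k j) x) := by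
    ext i
    simp only [vgrad, Matrix.mulVec, dotProduct, Matrix.of_apply]
    have h3 : ∀ l, pd l (fun y => ∑ j, (Pm n * A y) i j * n j) x
        = ∑ k, ∑ j, Pm n i k * n j * pd l (fun y => A y k j) x := by
      intro l
      rw [← pd_lin l A hA (fun k j => Pm n i k * n j), ← h1 i]
      rfl
    simp only [h3]
    generalize Pm n i = q
    simp only [Fin.sum_univ_three]
    ring
  rw [h2, dotp_Pm n a _ ha]
  simp only [dotp, PP, Fin.sum_univ_three]
  ring

lemma pdirM_test (n a b : V3) (A : V3 → M3) (x : V3) :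
    dotp a ((pdirM n A x).mulVec b) = PP A n a b x := by
  rw [dotp_mulVec]
  simp only [pdirM, Matrix.of_apply, pdir_eq, PP, Fin.sum_univ_three]
  ring

lemma tr2inc_test (n a b : V3) (ha : dotp a n = 0) (hb : dotp b n = 0) (A : V3 → M3)
    (hA : SmoothM A) (x : V3) :
    dotp a ((tr2inc n A x).mulVec b) = PP A b a n x + PP A a b n x - PP A n a b x := by
  rw [tr2inc, Matrix.sub_mulVec, Matrix.smul_mulVec, ← Matrix.mulVec_mulVec,
    Pm_mulVec n b hb, ← Matrix.mulVec_mulVec, dotp_eq, dotProduct_sub, dotProduct_smul,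
    ← dotp_eq, ← dotp_eq, dotp_Pm n a _ ha, pdirM_test, deff, dotp_msym,
    gradf_test n a b ha hb A hA, gradf_test n b a hb ha A hA, smul_eq_mul]
  ring

lemma frame_complete (t m n : V3)
    (ht : dotp t t = 1) (hm : dotp m m = 1) (hn : dotp n n = 1)
    (htm : dotp t m = 0) (htn : dotp t n = 0) (hmn : dotp m n = 0) (i j : Fin 3) :
    t i * t j + m i * m j + n i * n j = if i = j then 1 else 0 := by
  have h : (Matrix.of ![t, m, n] : M3) * (Matrix.of ![t, m, n] : M3)ᵀ = 1 := by
    simp only [dotp, Fin.sum_univ_three] at *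
    ext i j
    fin_cases i <;> fin_cases j <;>
      simp [Matrix.mul_apply, Fin.sum_univ_three] <;> linarith
  have h'' := mul_eq_one_comm.mp h
  have h' := congrArg (fun B : M3 => B i j) h''
  simpa [Matrix.mul_apply, Fin.sum_univ_three, Matrix.one_apply] using h'

lemma div_test (τ : V3 → M3) (hτ : SmoothM τ) (p m n : V3)
    (hc : ∀ i j, p i * p j + m i * m j + n i * n j = if i = j then 1 else 0) (u a x : V3) :
    pdir u (fun y => dotp a (mdiv τ y)) x
      = FF τ u p a p x + FF τ u m a m x + FF τ u n a n x := by
  have hd : ∀ i j, DifferentiableAt ℝ (fun y => a i * pd j (fun z => τ z i j) y) x :=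
    fun i j => ((pd_smooth j (hτ i j)).differentiable (by simp) x).const_mul _
  have h1 : ∀ k, pd k (fun y => dotp a (mdiv τ y)) x
      = ∑ i, ∑ j, a i * pd k (pd j (fun z => τ z i j)) x := by
    intro k
    simp only [dotp, mdiv, Finset.mul_sum]
    unfold pd at hd ⊢
    rw [fderiv_fun_sum (fun i _ => DifferentiableAt.fun_sum fun j _ => hd i j)]
    simp only [_root_.sum_apply]
    refine Finset.sum_congr rfl fun i _ => ?_
    rw [fderiv_fun_sum (fun j _ => hd i j)]
    simp only [_root_.sum_apply]
    refine Finset.sum_congr rfl fun j _ => ?_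
    have := (pd_smooth j (hτ i j)).differentiable (by simp) x
    unfold pd at this
    rw [fderiv_const_mul this]
    simp
  rw [pdir_eq]
  simp only [h1, FF, ← Finset.sum_add_distrib]
  refine Finset.sum_congr rfl fun k _ => ?_
  rw [Finset.mul_sum, Finset.sum_comm]
  refine Finset.sum_congr rfl fun i _ => ?_
  rw [Finset.mul_sum, Finset.sum_comm]
  have h2 : ∀ l j, u k * p l * a i * p j * pd k (pd l fun y => τ y i j) x +
      u k * m l * a i * m j * pd k (pd l fun y => τ y i j) x +
      u k * n l * a i * n j * pd k (pd l fun y => τ y i j) x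
      = if l = j then u k * a i * pd k (pd l fun y => τ y i j) x else 0 := by
    intro l j
    have := hc l j
    split_ifs with h
    · rw [if_pos h] at this
      linear_combination (u k * a i * pd k (pd l fun y => τ y i j) x) * this
    · rw [if_neg h] at this
      linear_combination (u k * a i * pd k (pd l fun y => τ y i j) x) * this
  simp only [h2, Finset.sum_ite_eq', Finset.mem_univ, if_true]
  refine Finset.sum_congr rfl fun j _ => ?_
  ring

/-- edge trace identity
mᵀ(tr3cott τ)t' = tre3(τ) + (1/2)∂_t∂_t(nᵀτn + 2 t'ᵀ(tr1cott τ)m) − ∂_{t'}∂_m(tᵀ(tr1cott τ)t). -/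
theorem edge_trace_tr3cott_mt' (τ : V3 → M3) (hτ : SmoothM τ) (hsym : ∀ x, (τ x)ᵀ = τ x)
    (t m n : V3)
    (ht : dotp t t = 1) (hm : dotp m m = 1) (hn : dotp n n = 1)
    (htm : dotp t m = 0) (htn : dotp t n = 0) (hmn : dotp m n = 0) :
    ∀ x, dotp m ((tr3cott n τ x).mulVec (cross n m)) =
      tre3 t τ x
        + (1 / 2 : ℝ) * pdir t (pdir t fun y =>
            dotp n ((τ y).mulVec n)
              + 2 * dotp (cross n m) ((tr1cott n τ y).mulVec m)) x
        - pdir (cross n m)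
            (fun y => pdir m (fun z => dotp t ((tr1cott n τ z).mulVec t)) y) x := by

  intro x
  have hcr : ∀ a b c : V3, cross a (cross b c) = fun i => b i * dotp a c - c i * dotp a b := by
    intro a b c
    ext i
    simp only [cross, dotp, Fin.sum_univ_three]
    fin_cases i <;> simp <;> ring
  have hac : ∀ a b : V3, cross a b = fun i => - cross b a i := by
    intro a b
    ext i
    simp only [cross]
    ring
  have hdc : ∀ a b : V3, dotp a b = dotp b a := by
    intro a b
    simp only [dotp, mul_comm]
  have hmp : cross m (cross n m) = n := by
    rw [hcr, hm, hmn]; ext i; ring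
  have hnp : cross n (cross n m) = fun i => - m i := by
    rw [hcr, hn, hdc n m, hmn]; ext i; ring
  have hpn' : cross (cross n m) n = m := by
    rw [hac, hnp]; ext i; ring
  have hpm : dotp (cross n m) m = 0 := by
    simp [dotp, cross, Fin.sum_univ_three]; ring
  have hpn : dotp (cross n m) n = 0 := by
    simp [dotp, cross, Fin.sum_univ_three]; ring
  have hpp : dotp (cross n m) (cross n m) = 1 := by
    simp [dotp, cross, Fin.sum_univ_three] at *
    linear_combination (m 0 * m 0 + m 1 * m 1 + m 2 * m 2) * hn + hm
      - (m 0 * n 0 + m 1 * n 1 + m 2 * n 2) * hmn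
  have hσ := smooth_symcurl τ hτ
  have hcol := colcurl_eq (fun y => msym (mcurl τ y)) n m (cross n m) x
  generalize hp : cross n m = p at *
  have hc := frame_complete p m n hpp hm hn hpm hpn hmn
  have hc' := frame_complete t m n ht hm hn htm htn hmn
  have tt : ∀ i j, t i * t j = p i * p j := by
    intro i j
    linarith [hc i j, hc' i j]
  have ttB : ∀ B : M3, dotp t (B.mulVec t) = dotp p (B.mulVec p) := by
    intro B
    simp only [dotp_mulVec, tt]
  have ttF : ∀ v b, FF τ t v t b x = FF τ p v p b x := by
    intro v b
    simp only [FF]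
    refine Finset.sum_congr rfl fun k _ => Finset.sum_congr rfl fun l _ => ?_
    refine Finset.sum_congr rfl fun i _ => Finset.sum_congr rfl fun j _ => ?_
    linear_combination (v l * b j * pd k (pd l (fun y => τ y i j)) x) * tt k i
  have hs : ∀ y i j, τ y i j = τ y j i := by
    intro y i j
    have := congrFun (congrFun (hsym y) j) i
    simpa using this
  have e1 : (fun y => dotp n ((τ y).mulVec n) + 2 * dotp p ((tr1cott n τ y).mulVec m))
      = fun y => ∑ i, ∑ j, (n i * n j + p i * p j - m i * m j) * τ y i j := by
    ext y
    rw [tr1cott, dotp_msym, dotp_mcrossv n p m hpn, dotp_mcrossv n m p hmn, hp, hnp]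
    simp only [dotp_mulVec, Fin.sum_univ_three]
    ring
  have e2 : (fun y => dotp t ((tr1cott n τ y).mulVec t))
      = fun y => ∑ i, ∑ j, (-(p i * m j)) * τ y i j := by
    ext y
    rw [ttB, tr1cott, dotp_msym, dotp_mcrossv n p p hpn, hnp]
    simp only [dotp_mulVec, Fin.sum_univ_three]
    ring
  have e1' : pdir t (pdir t fun y =>
      dotp n ((τ y).mulVec n) + 2 * dotp p ((tr1cott n τ y).mulVec m)) x
      = FF τ p p n n x + FF τ p p p p x - FF τ p p m m x := by
    rw [e1, pdir_pdir_lin t t τ hτ]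
    simp only [FF, ← Finset.sum_add_distrib, ← Finset.sum_sub_distrib]
    refine Finset.sum_congr rfl fun k _ => Finset.sum_congr rfl fun l _ => ?_
    refine Finset.sum_congr rfl fun i _ => Finset.sum_congr rfl fun j _ => ?_
    rw [tt k l]
    ring
  have e2' : pdir p (fun y => pdir m (fun z => dotp t ((tr1cott n τ z).mulVec t)) y) x
      = - FF τ p m p m x := by
    change pdir p (pdir m (fun z => dotp t ((tr1cott n τ z).mulVec t))) x = _
    rw [e2, pdir_pdir_lin p m τ hτ]
    simp only [FF, ← Finset.sum_neg_distrib]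
    refine Finset.sum_congr rfl fun k _ => Finset.sum_congr rfl fun l _ => ?_
    refine Finset.sum_congr rfl fun i _ => Finset.sum_congr rfl fun j _ => ?_
    ring
  have c1 : CC τ p m n x = FF τ p m m p x - FF τ p p m m x := by
    have := CC_cross τ p m m p x
    rwa [hmp] at this
  have c2 : CC τ p n m x = FF τ p p n n x - FF τ p n n p x := by
    have := CC_cross τ p n p n x
    rwa [hpn'] at this
  have c3 : PP (fun y => msym (mcurl τ y)) m p n x = PP (fun y => msym (mcurl τ y)) m n p x := by
    rw [PP_symcurl τ hτ, PP_symcurl τ hτ]; ring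
  rw [e1', e2', tr3cott, devf_test n m p hmn hpn (by rw [hdc, hpm]),
    tr2inc_test n m p hmn hpn _ hσ, tre3, ttB, hcol, div_test τ hτ p m n hc, ttF, ttF, ttF,
    PP_symcurl τ hτ p m n, c1, c2, c3, FF_symm τ hsym p m m p, FF_symm τ hsym p n n p]
  ring

end
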